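/- arXiv:2203.03641 — 6 statements merged into one kernel-verified Lean document; each statement's English description precedes it below -/
import Mathlib

section
/- Let A be a mixing finite-dimensional F-algebra, S a finite generating set of A, and (m_1, …, m_d) the characteristic sequence of S. Then m_{j+1} − m_j ≤ 1 for all j = 1, …, d−1; equivalently, for every k ≥ 1 with L_k(S) ≠ A one has dim L_{k+1}(S) > dim L_k(S). -/
/-!
Framework: length of finite-dimensional not necessarily associative,
not necessarily unital algebras (non-unital convention: `L_0(S) = 0`).
The multiplication of the algebra is passed explicitly as a binary
operation `μ`, so that the same definitions apply to an algebra, to its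
commutator algebra, to a Lie bracket, etc.
-/

open Submodule Module

/-- `IsWord μ S k w`: `w` is a product of `k` elements of `S` (with respect to the
multiplication `μ`) with some placement of parentheses. -/
inductive IsWord {A : Type*} (μ : A → A → A) (S : Set A) : ℕ → A → Prop
  | base {a : A} (ha : a ∈ S) : IsWord μ S 1 a
  | mul {m n : ℕ} {a b : A} (ha : IsWord μ S m a) (hb : IsWord μ S n b) :
      IsWord μ S (m + n) (μ a b)

/-- The multiplication of an algebra, as a plain binary operation. -/
def amul (A : Type*) [Mul A] : A → A → A := fun a b => a * b

section
variable (F : Type*) {A : Type*} [Field F] [AddCommGroup A] [Module F A]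

/-- `L_i(S)`: the linear span of all words in `S` of length at most `i`
(non-unital convention, so `L_0(S) = 0`). -/
def Lset (μ : A → A → A) (S : Set A) (i : ℕ) : Submodule F A :=
  Submodule.span F {a | ∃ k, k ≤ i ∧ IsWord μ S k a}

/-- `S` generates the algebra, i.e. the span of all words in `S` is everything. -/
def Generates (μ : A → A → A) (S : Set A) : Prop :=
  Submodule.span F {a | ∃ k, IsWord μ S k a} = ⊤

/-- `l(S)`: the length of a generating set `S`, the least `k` with `L_k(S) = A`. -/
noncomputable def lenSet (μ : A → A → A) (S : Set A) : ℕ :=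
  sInf {k | Lset F μ S k = ⊤}

/-- An irreducible word of length `k` in `S`. -/
def IrredWord (μ : A → A → A) (S : Set A) (k : ℕ) (w : A) : Prop :=
  IsWord μ S k w ∧ ∀ m, m < k → w ∉ Lset F μ S m

end

section
variable {A : Type*}

/-- The set `P(x,y,z)` of monomials. -/
def Pset (μ : A → A → A) (x y z : A) : Set A :=
  {μ (μ x z) y, μ (μ z x) y, μ (μ y z) x, μ (μ z y) x,
   μ x (μ z y), μ x (μ y z), μ y (μ x z), μ y (μ z x),
   μ x y, μ y x, μ x z, μ z x, μ y z, μ z y, x, y, z}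

/-- The set `Q_l(x,y,z)` of monomials. -/
def Qlset (μ : A → A → A) (x y z : A) : Set A :=
  {μ x (μ z y), μ x (μ y z), μ y (μ x z), μ y (μ z x),
   μ x y, μ y x, μ x z, μ z x, μ y z, μ z y, x, y, z}

/-- The set `Q_r(x,y,z)` of monomials. -/
def Qrset (μ : A → A → A) (x y z : A) : Set A :=
  {μ (μ x z) y, μ (μ z x) y, μ (μ y z) x, μ (μ z y) x,
   μ x y, μ y x, μ x z, μ z x, μ y z, μ z y, x, y, z}

end

section
variable (F : Type*) {A : Type*} [Field F] [AddCommGroup A] [Module F A]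

/-- A mixing algebra: `(xy)z` and `z(xy)` lie in the span of `P(x,y,z)`. -/
def IsMixing (μ : A → A → A) : Prop :=
  ∀ x y z : A, μ (μ x y) z ∈ Submodule.span F (Pset μ x y z) ∧
    μ z (μ x y) ∈ Submodule.span F (Pset μ x y z)

/-- A sliding algebra: either `z(xy)` always lies in the span of `Q_r(x,y,z)`, or
`(xy)z` always lies in the span of `Q_l(x,y,z)`. -/
def IsSliding (μ : A → A → A) : Prop :=
  (∀ x y z : A, μ z (μ x y) ∈ Submodule.span F (Qrset μ x y z)) ∨
  (∀ x y z : A, μ (μ x y) z ∈ Submodule.span F (Qlset μ x y z))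

end

section
variable {F B : Type*} [Field F] [NonUnitalNonAssocRing B] [Module F B]

theorem Lset_mono (μ : B → B → B) (S : Set B) : Monotone (Lset F μ S) := by
  intro i j hij
  exact Submodule.span_mono fun _ ⟨k, hk, hw⟩ => ⟨k, hk.trans hij, hw⟩

theorem IsWord.mem_Lset {μ : B → B → B} {S : Set B} {k i : ℕ} {w : B}
    (hw : IsWord μ S k w) (hk : k ≤ i) : w ∈ Lset F μ S i :=
  Submodule.subset_span ⟨k, hk, hw⟩

theorem mul_mem_Lset_add [SMulCommClass F B B] [IsScalarTower F B B] {S : Set B} {i j : ℕ}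
    {a b : B} (ha : a ∈ Lset F (amul B) S i) (hb : b ∈ Lset F (amul B) S j) :
    a * b ∈ Lset F (amul B) S (i + j) := by
  refine Submodule.span_induction₂ (p := fun a b _ _ => a * b ∈ Lset F (amul B) S (i + j))
    ?_ ?_ ?_ ?_ ?_ ?_ ?_ ha hb
  · rintro x y ⟨m, hm, hx⟩ ⟨n, hn, hy⟩
    exact (IsWord.mul hx hy).mem_Lset (Nat.add_le_add hm hn)
  · intro y _
    simp
  · intro x _
    simp
  · intro x y z _ _ _ hx hy
    simpa only [add_mul] using add_mem hx hy
  · intro x y z _ _ _ hx hy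
    simpa only [mul_add] using add_mem hx hy
  · intro r x y _ _ h
    simpa only [smul_mul_assoc] using Submodule.smul_mem _ r h
  · intro r x y _ _ h
    simpa only [mul_smul_comm] using Submodule.smul_mem _ r h

/-- In a mixing algebra, a subspace containing `S` and stable under left and right
multiplication by elements of `S` contains every word in `S` and is stable under left and
right multiplication by it. -/
theorem IsMixing.word_mem_and_stable (hmix : IsMixing F (amul B)) {S : Set B}
    {V : Submodule F B} (hS : S ⊆ V) (hr : ∀ s ∈ S, ∀ z ∈ V, z * s ∈ V)
    (hl : ∀ s ∈ S, ∀ z ∈ V, s * z ∈ V) {n : ℕ} {w : B} (hw : IsWord (amul B) S n w) :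
    w ∈ V ∧ ∀ z ∈ V, z * w ∈ V ∧ w * z ∈ V := by
  induction hw with
  | base ha => exact ⟨hS ha, fun z hz => ⟨hr _ ha z hz, hl _ ha z hz⟩⟩
  | @mul m n x y _ _ hx hy =>
    obtain ⟨hxV, hx⟩ := hx
    obtain ⟨hyV, hy⟩ := hy
    refine ⟨(hx y hyV).2, fun z hz => ?_⟩
    have hP : Submodule.span F (Pset (amul B) x y z) ≤ V := by
      rw [Submodule.span_le]
      have hzx := hx z hz
      have hzy := hy z hz
      have hyx := hx y hyV
      rintro a (rfl | rfl | rfl | rfl | rfl | rfl | rfl | rfl | rfl | rfl | rfl | rfl | rfl |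
        rfl | rfl | rfl | rfl)
      exacts [(hy _ hzx.2).1, (hy _ hzx.1).1, (hx _ hzy.2).1, (hx _ hzy.1).1,
        (hx _ hzy.1).2, (hx _ hzy.2).2, (hy _ hzx.2).2, (hy _ hzx.1).2,
        hyx.2, hyx.1, hzx.2, hzx.1, hzy.2, hzy.1, hxV, hyV, hz]
    exact ⟨hP (hmix x y z).2, hP (hmix x y z).1⟩

end

/-- for a mixing algebra, consecutive terms of the characteristic sequence
of a finite generating set `S` differ by at most `1`; equivalently, for every `k ≥ 1`
with `L_k(S) ≠ A` one has `dim L_{k+1}(S) > dim L_k(S)`. -/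
theorem mixing_char_seq_steps_le_one
    {F B : Type*} [Field F] [NonUnitalNonAssocRing B] [Module F B]
    [SMulCommClass F B B] [IsScalarTower F B B] [FiniteDimensional F B]
    (hmix : IsMixing F (amul B))
    (S : Set B) (hSfin : S.Finite) (hSgen : Generates F (amul B) S) :
    ∀ k : ℕ, 1 ≤ k → Lset F (amul B) S k ≠ ⊤ →
      finrank F (Lset F (amul B) S k) < finrank F (Lset F (amul B) S (k + 1)) := by
  intro k hk htop
  apply Submodule.finrank_lt_finrank_of_lt
  refine lt_of_le_of_ne (Lset_mono _ _ k.le_succ) fun heq => htop ?_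
  have hS : ∀ s ∈ S, s ∈ Lset F (amul B) S 1 := fun s hs => (IsWord.base hs).mem_Lset le_rfl
  rw [eq_top_iff, ← hSgen, Submodule.span_le]
  rintro w ⟨n, hw⟩
  refine (hmix.word_mem_and_stable (fun s hs => Lset_mono _ _ hk (hS s hs)) ?_ ?_ hw).1
  · intro s hs z hz
    rw [heq]
    exact mul_mem_Lset_add hz (hS s hs)
  · intro s hs z hz
    rw [heq, add_comm]
    exact mul_mem_Lset_add (hS s hs) hz
end

section
/- For every field F and every integer d ≥ 3, the d-dimensional F-algebra B_d with basis x_1, …, x_d and multiplication determined by x_i x_1 = x_{i+1} for i = 1, …, d−1, all other products of basis elements being zero, is a Leibniz algebra and l(B_d) = d. -/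
/-!
Framework: length of finite-dimensional not necessarily associative,
not necessarily unital algebras (non-unital convention: `L_0(S) = 0`).
The multiplication of the algebra is passed explicitly as a binary
operation `μ`, so that the same definitions apply to an algebra, to its
commutator algebra, to a Lie bracket, etc.
-/

open Submodule Module

section
variable {F B : Type*} [Field F] [NonUnitalNonAssocRing B] [Module F B]
  [IsScalarTower F B B]

/-- If every product `x * y` is `c y • (x * e)` and `c` vanishes on products, then a word of
length `j + 1` is a scalar multiple of a generator multiplied `j` times by `e` on the right. -/
lemma IsWord.exists_eq_smul_mulRight_pow {e : B} {c : B →ₗ[F] F}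
    (h : ∀ x y : B, x * y = c y • (x * e)) (hc : ∀ x : B, c (x * e) = 0)
    {S : Set B} {k : ℕ} {w : B} (hw : IsWord (amul B) S k w) :
    ∃ j, k = j + 1 ∧ ∃ r : F, ∃ s ∈ S, w = r • (LinearMap.mulRight F e ^ j) s := by
  induction hw with
  | base ha => exact ⟨0, rfl, 1, _, ha, by simp⟩
  | mul _ _ iha ihb =>
    obtain ⟨i, rfl, r, s, hs, rfl⟩ := iha
    obtain ⟨j, rfl, t, s', -, rfl⟩ := ihb
    refine ⟨i + j + 1, by omega, ?_⟩
    rw [amul, h]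
    cases j with
    | zero =>
      refine ⟨c (t • s') * r, s, hs, ?_⟩
      simp [pow_succ', smul_mul_assoc, smul_smul]
    | succ j =>
      refine ⟨0, s, hs, ?_⟩
      simp [pow_succ', hc]

/-- Words of length greater than `d` vanish if right multiplication by `e` has vanishing
`d`-th power. -/
lemma Generates.lset_eq_top {e : B} {c : B →ₗ[F] F}
    (h : ∀ x y : B, x * y = c y • (x * e)) (hc : ∀ x : B, c (x * e) = 0) {d : ℕ}
    (hd : LinearMap.mulRight F e ^ d = 0) {S : Set B} (hS : Generates F (amul B) S) :
    Lset F (amul B) S d = ⊤ := by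
  rw [eq_top_iff, ← hS, Submodule.span_le]
  rintro w ⟨k, hw⟩
  by_cases hk : k ≤ d
  · exact Submodule.subset_span ⟨k, hk, hw⟩
  · obtain ⟨j, rfl, r, s, -, rfl⟩ := hw.exists_eq_smul_mulRight_pow h hc
    rw [pow_eq_zero_of_le (by omega) hd]
    simp

end

/-- for `d ≥ 3`, the `d`-dimensional algebra `B_d` with basis
`x_1, …, x_d` (here `b 0, …, b (d-1)`) and multiplication `x_i x_1 = x_{i+1}`
(`i = 1, …, d−1`), other products of basis vectors being zero, is a Leibniz algebra
and `l(B_d) = d`. -/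
theorem leibniz_example_length_eq_dim
    {F B : Type*} [Field F] [NonUnitalNonAssocRing B] [Module F B]
    [SMulCommClass F B B] [IsScalarTower F B B]
    (d : ℕ) (hd : 3 ≤ d) (b : Basis (Fin d) F B)
    (hmul : ∀ i j : Fin d, b i * b j =
      if h : (j : ℕ) = 0 ∧ (i : ℕ) + 1 < d then b ⟨(i : ℕ) + 1, h.2⟩ else 0) :
    (∀ x y z : B, (x * y) * z = x * (y * z) + (x * z) * y) ∧
    (∀ S : Set B, S.Finite → Generates F (amul B) S → lenSet F (amul B) S ≤ d) ∧
    (∃ S : Set B, S.Finite ∧ Generates F (amul B) S ∧ lenSet F (amul B) S = d) := by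
  have hd0 : 0 < d := by omega
  set e : B := b ⟨0, hd0⟩ with he
  set c : B →ₗ[F] F := b.coord ⟨0, hd0⟩ with hcdef
  have hshift : ∀ i : Fin d, b i * e = if h : (i : ℕ) + 1 < d then b ⟨i + 1, h⟩ else 0 := by
    intro i
    simp [he, hmul]
  have h : ∀ x y : B, x * y = c y • (x * e) := by
    have hmaps : LinearMap.mul F B =
        (LinearMap.lsmul F B ∘ₗ c).flip ∘ₗ LinearMap.mulRight F e := by
      refine b.ext fun i => b.ext fun j => ?_
      by_cases hj : j = ⟨0, hd0⟩
      · subst hj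
        simp [he, hcdef]
      · have hj' : (j : ℕ) ≠ 0 := fun h0 => hj (Fin.ext h0)
        simp [hmul, hcdef, hj', Finsupp.single_eq_of_ne (Ne.symm hj)]
    intro x y
    simpa using LinearMap.congr_fun₂ hmaps x y
  have hc : ∀ x : B, c (x * e) = 0 := by
    have hmaps : c ∘ₗ LinearMap.mulRight F e = 0 := by
      refine b.ext fun i => ?_
      simp only [LinearMap.comp_apply, LinearMap.mulRight_apply, hshift]
      split_ifs
      · simp [hcdef]
      · simp
    exact fun x => LinearMap.congr_fun hmaps x
  have hpow : ∀ (j : ℕ) (i : Fin d), (LinearMap.mulRight F e ^ j) (b i) =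
      if h : (i : ℕ) + j < d then b ⟨i + j, h⟩ else 0 := by
    intro j i
    induction j with
    | zero => simp
    | succ j ih =>
      rw [pow_succ', Module.End.mul_apply, ih]
      by_cases hj : (i : ℕ) + j < d
      · simp [hj, hshift, add_assoc]
      · have hj' : ¬ (i : ℕ) + (j + 1) < d := by omega
        simp [hj, hj']
  have hnil : LinearMap.mulRight F e ^ d = 0 := b.ext fun i => by simp [hpow]
  have hword : ∀ i : ℕ, ∀ hi : i < d, IsWord (amul B) {e} (i + 1) (b ⟨i, hi⟩) := by
    intro i
    induction i with
    | zero => exact fun _ => .base rfl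
    | succ i ih =>
      intro hi
      have hmulword := (ih (by omega)).mul (.base (Set.mem_singleton e))
      simpa [amul, hshift, hi] using hmulword
  have hgen : Generates F (amul B) {e} := by
    rw [Generates, eq_top_iff, ← b.span_eq, Submodule.span_le]
    rintro _ ⟨i, rfl⟩
    exact Submodule.subset_span ⟨_, hword i i.2⟩
  refine ⟨fun x y z => ?_, fun S _ hS => Nat.sInf_le (hS.lset_eq_top h hc hnil),
    {e}, Set.finite_singleton e, hgen, ?_⟩
  · rw [h (x * y) z, h x y, h x (y * z), h (x * z) y, h x z, h y z]
    simp [hc, smul_mul_assoc, smul_smul, mul_comm]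
  · refine le_antisymm (Nat.sInf_le (hgen.lset_eq_top h hc hnil))
      (le_csInf ⟨d, hgen.lset_eq_top h hc hnil⟩ fun k hk => ?_)
    by_contra! hkd
    have hle : Lset F (amul B) {e} k ≤ LinearMap.ker (b.coord ⟨d - 1, by omega⟩) := by
      refine Submodule.span_le.2 ?_
      rintro w ⟨n, hn, hw⟩
      obtain ⟨j, rfl, r, s, rfl, rfl⟩ := hw.exists_eq_smul_mulRight_pow h hc
      have hj : j < d := by omega
      have hj' : j ≠ d - 1 := by omega
      have hje : (LinearMap.mulRight F e ^ j) e = b ⟨j, hj⟩ := (hpow j _).trans (by simp [hj])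
      simp [hje, hj']
    have hlast : b ⟨d - 1, by omega⟩ ∈ Lset F (amul B) {e} k := by
      rw [show Lset F (amul B) {e} k = ⊤ from hk]
      trivial
    simpa using hle hlast
end

section
/- For every field F and every integer d ≥ 3, the d-dimensional filiform F-algebra A_d with basis x_1, …, x_d and multiplication determined by x_1 x_i = x_{i+1} and x_i x_1 = −x_{i+1} for i = 2, …, d−1, all other products of basis elements being zero, is a Lie algebra and l(A_d) = d − 1. -/
/-!
Framework: length of finite-dimensional not necessarily associative,
not necessarily unital algebras (non-unital convention: `L_0(S) = 0`).
The multiplication of the algebra is passed explicitly as a binary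
operation `μ`, so that the same definitions apply to an algebra, to its
commutator algebra, to a Lie bracket, etc.
-/

open Submodule Module

theorem IsWord.one_le {A : Type*} {μ : A → A → A} {S : Set A} {k : ℕ} {w : A}
    (hw : IsWord μ S k w) : 1 ≤ k := by
  induction hw with
  | base _ => exact le_rfl
  | mul _ _ ihm _ => omega

section Filiform

variable {F B : Type*} [Field F] [NonUnitalNonAssocRing B] [Module F B]
  {d : ℕ} {b : Basis (Fin d) F B}

/-- The filiform multiplication table expands bilinearly to
`(x y)_j = x_0 y_{j-1} - y_0 x_{j-1}` for `j ≥ 2`, and `(x y)_0 = (x y)_1 = 0`. -/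
theorem filiform_repr_mul [SMulCommClass F B B] [IsScalarTower F B B] (hd : 3 ≤ d)
    (hmul : ∀ i j : Fin d, b i * b j =
      if h : (i : ℕ) = 0 ∧ 1 ≤ (j : ℕ) ∧ (j : ℕ) + 1 < d then b ⟨(j : ℕ) + 1, h.2.2⟩
      else if h' : (j : ℕ) = 0 ∧ 1 ≤ (i : ℕ) ∧ (i : ℕ) + 1 < d then
        -b ⟨(i : ℕ) + 1, h'.2.2⟩
      else 0) (x y : B) (j : Fin d) :
    b.repr (x * y) j = if 2 ≤ (j : ℕ) then
      b.repr x ⟨0, by omega⟩ * b.repr y ⟨j - 1, by omega⟩ -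
        b.repr y ⟨0, by omega⟩ * b.repr x ⟨j - 1, by omega⟩ else 0 := by
  let rhs : B →ₗ[F] B →ₗ[F] F := LinearMap.mk₂ F (fun x y => if 2 ≤ (j : ℕ) then
      b.repr x ⟨0, by omega⟩ * b.repr y ⟨j - 1, by omega⟩ -
        b.repr y ⟨0, by omega⟩ * b.repr x ⟨j - 1, by omega⟩ else 0)
    (by intros; split_ifs <;> simp; ring) (by intros; split_ifs <;> simp; ring)
    (by intros; split_ifs <;> simp; ring) (by intros; split_ifs <;> simp; ring)
  have key : (LinearMap.mul F B).compr₂ (b.coord j) = rhs := by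
    refine LinearMap.ext_basis b b fun i k => ?_
    obtain ⟨i, hi⟩ := i
    obtain ⟨k, hk⟩ := k
    obtain ⟨j, hj⟩ := j
    simp only [LinearMap.compr₂_apply, LinearMap.mul_apply', hmul, Basis.coord_apply, rhs,
      LinearMap.mk₂_apply, Basis.repr_self, Finsupp.single_apply, Fin.mk.injEq]
    split_ifs <;> simp [Finsupp.single_apply] <;> omega
  exact LinearMap.congr_fun₂ key x y

/-- Words of length `k ≥ 2` have no component along the first `k` basis vectors. -/
theorem filiform_repr_word_eq_zero_of_lt (hd : 3 ≤ d)
    (hrepr : ∀ (x y : B) (j : Fin d), b.repr (x * y) j = if 2 ≤ (j : ℕ) then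
      b.repr x ⟨0, by omega⟩ * b.repr y ⟨j - 1, by omega⟩ -
        b.repr y ⟨0, by omega⟩ * b.repr x ⟨j - 1, by omega⟩ else 0) {S : Set B} {k : ℕ} {w : B}
    (hw : IsWord (amul B) S k w) (hk : 2 ≤ k) (j : Fin d) (hj : (j : ℕ) < k) :
    b.repr w j = 0 := by
  induction hw generalizing j with
  | base _ => omega
  | @mul m n u v hu hv ihu ihv =>
    have hm := hu.one_le
    have hn := hv.one_le
    rw [amul, hrepr]
    split_ifs with h2
    · have left : b.repr u ⟨0, by omega⟩ * b.repr v ⟨j - 1, by omega⟩ = 0 := by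
        by_cases hm2 : 2 ≤ m
        · rw [ihu hm2 _ (show 0 < m by omega), zero_mul]
        · rw [ihv (by omega) _ (show (j : ℕ) - 1 < n by omega), mul_zero]
      have right : b.repr v ⟨0, by omega⟩ * b.repr u ⟨j - 1, by omega⟩ = 0 := by
        by_cases hn2 : 2 ≤ n
        · rw [ihv hn2 _ (show 0 < n by omega), zero_mul]
        · rw [ihu (by omega) _ (show (j : ℕ) - 1 < m by omega), mul_zero]
      rw [left, right, sub_zero]
    · rfl

/-- Words of length `k` in the first two basis vectors have no component along the
basis vectors of index greater than `k`. -/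
theorem filiform_repr_word_eq_zero_of_gt (hd : 3 ≤ d)
    (hrepr : ∀ (x y : B) (j : Fin d), b.repr (x * y) j = if 2 ≤ (j : ℕ) then
      b.repr x ⟨0, by omega⟩ * b.repr y ⟨j - 1, by omega⟩ -
        b.repr y ⟨0, by omega⟩ * b.repr x ⟨j - 1, by omega⟩ else 0) {k : ℕ} {w : B}
    (hw : IsWord (amul B) {b ⟨0, by omega⟩, b ⟨1, by omega⟩} k w) (j : Fin d)
    (hj : k < (j : ℕ)) : b.repr w j = 0 := by
  induction hw generalizing j with
  | base ha =>
    rcases ha with rfl | rfl <;>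
      rw [Basis.repr_self, Finsupp.single_apply, if_neg] <;>
      rintro rfl <;> simp at hj
  | @mul m n u v hu hv ihu ihv =>
    have hm := hu.one_le
    have hn := hv.one_le
    rw [amul, hrepr, if_pos (by omega), ihv _ (show n < (j : ℕ) - 1 by omega),
      ihu ⟨j - 1, by omega⟩ (show m < (j : ℕ) - 1 by omega), mul_zero, mul_zero, sub_zero]

end Filiform

/-- for `d ≥ 3`, the `d`-dimensional filiform algebra `A_d` with basis
`x_1, …, x_d` (here `b 0, …, b (d-1)`) and multiplication `x_1 x_i = x_{i+1} = −x_i x_1`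
(`i = 2, …, d−1`), other products of basis vectors being zero, is a Lie algebra and
`l(A_d) = d − 1`. -/
theorem filiform_lie_length_eq_dim_sub_one
    {F B : Type*} [Field F] [NonUnitalNonAssocRing B] [Module F B]
    [SMulCommClass F B B] [IsScalarTower F B B]
    (d : ℕ) (hd : 3 ≤ d) (b : Basis (Fin d) F B)
    (hmul : ∀ i j : Fin d, b i * b j =
      if h : (i : ℕ) = 0 ∧ 1 ≤ (j : ℕ) ∧ (j : ℕ) + 1 < d then b ⟨(j : ℕ) + 1, h.2.2⟩
      else if h' : (j : ℕ) = 0 ∧ 1 ≤ (i : ℕ) ∧ (i : ℕ) + 1 < d then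
        -b ⟨(i : ℕ) + 1, h'.2.2⟩
      else 0) :
    (∀ x : B, x * x = 0) ∧
    (∀ x y z : B, (x * y) * z + (y * z) * x + (z * x) * y = 0) ∧
    (∀ S : Set B, S.Finite → Generates F (amul B) S → lenSet F (amul B) S ≤ d - 1) ∧
    (∃ S : Set B, S.Finite ∧ Generates F (amul B) S ∧ lenSet F (amul B) S = d - 1) := by
  have hrepr := filiform_repr_mul hd hmul
  have upper : ∀ S : Set B, Generates F (amul B) S → Lset F (amul B) S (d - 1) = ⊤ := by
    intro S hS
    rw [eq_top_iff, ← hS, Submodule.span_le]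
    rintro w ⟨k, hw⟩
    by_cases hk : k ≤ d - 1
    · exact Submodule.subset_span ⟨k, hk, hw⟩
    · have hw0 : w = 0 := b.ext_elem fun j => by
        rw [filiform_repr_word_eq_zero_of_lt hd hrepr hw (by omega) j (by omega), map_zero,
          Finsupp.zero_apply]
      rw [hw0]
      exact zero_mem _
  refine ⟨fun x => b.ext_elem fun j => ?_, fun x y z => b.ext_elem fun j => ?_,
    fun S _ hS => Nat.sInf_le (upper S hS), {b ⟨0, by omega⟩, b ⟨1, by omega⟩},
    Set.toFinite _, ?_⟩
  · rw [hrepr]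
    simp
  · simp only [map_add, Finsupp.add_apply, hrepr, map_zero, Finsupp.zero_apply]
    split_ifs <;> first | omega | simp
    ring
  · have word : ∀ k (hk : k + 1 < d),
        IsWord (amul B) {b ⟨0, by omega⟩, b ⟨1, by omega⟩} (k + 1) (b ⟨k + 1, hk⟩) := by
      intro k
      induction k with
      | zero => exact fun _ => .base (by simp)
      | succ k ih =>
        intro hk
        have hprod : amul B (b ⟨0, by omega⟩) (b ⟨k + 1, by omega⟩) = b ⟨k + 1 + 1, hk⟩ := by
          rw [amul, hmul, dif_pos ⟨rfl, Nat.le_add_left 1 k, hk⟩]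
        rw [← hprod, add_comm (k + 1) 1]
        exact .mul (.base (by simp)) (ih _)
    have hgen : Generates F (amul B) {b ⟨0, by omega⟩, b ⟨1, by omega⟩} := by
      rw [Generates, eq_top_iff, ← b.span_eq, Submodule.span_le]
      rintro _ ⟨⟨i, hi⟩, rfl⟩
      cases i with
      | zero => exact Submodule.subset_span ⟨1, .base (by simp)⟩
      | succ i => exact Submodule.subset_span ⟨i + 1, word i hi⟩
    refine ⟨hgen, le_antisymm (Nat.sInf_le (upper _ hgen))
      (le_csInf ⟨_, upper _ hgen⟩ fun k hk => ?_)⟩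
    by_contra! hlt
    have hle : Lset F (amul B) {b ⟨0, by omega⟩, b ⟨1, by omega⟩} k ≤
        LinearMap.ker (b.coord ⟨d - 1, by omega⟩) := by
      refine Submodule.span_le.2 ?_
      rintro w ⟨m, hm, hw⟩
      exact filiform_repr_word_eq_zero_of_gt hd hrepr hw _ (show m < d - 1 by omega)
    rw [show Lset F (amul B) _ k = ⊤ from hk] at hle
    have hlast := hle (Submodule.mem_top (x := b ⟨d - 1, by omega⟩))
    simp at hlast
end

section
/- For every field F and every integer d ≥ 3, the d-dimensional F-algebra C_d with basis x_1, …, x_d and multiplication determined by x_1 x_i = x_{i+1} for i = 1, …, d−1, all other products of basis elements being zero, is a Novikov algebra and l(C_d) = d. -/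
/-!
Framework: length of finite-dimensional not necessarily associative,
not necessarily unital algebras (non-unital convention: `L_0(S) = 0`).
The multiplication of the algebra is passed explicitly as a binary
operation `μ`, so that the same definitions apply to an algebra, to its
commutator algebra, to a Lie bracket, etc.
-/

open Submodule Module

section RankOneMultiplication

variable {F B : Type*} [Field F] [NonUnitalNonAssocRing B] [Module F B]

/-- If `x * y = φ x • T y` with `φ ∘ T = 0`, a word of length `k` in `S` is a scalar multiple of
`T ^ (k - 1)` applied to an element of `S`. -/
theorem IsWord.exists_smul_pow {φ : B →ₗ[F] F} {T : End F B}
    (hmulT : ∀ x y : B, x * y = φ x • T y) (hφT : ∀ y, φ (T y) = 0)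
    {S : Set B} {k : ℕ} {w : B} (hw : IsWord (amul B) S k w) :
    1 ≤ k ∧ ∃ c : F, ∃ s ∈ S, w = c • (T ^ (k - 1)) s := by
  induction hw with
  | @base a ha => exact ⟨le_rfl, 1, a, ha, by simp⟩
  | @mul m n x y hx hy ihx ihy =>
    obtain ⟨hm, c, s, hs, rfl⟩ := ihx
    obtain ⟨hn, c', s', hs', rfl⟩ := ihy
    refine ⟨by omega, ?_⟩
    obtain rfl | ⟨m, rfl⟩ : m = 1 ∨ ∃ j, m = j + 2 := by
      rcases m with _ | _ | m
      · omega
      · exact Or.inl rfl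
      · exact Or.inr ⟨m, rfl⟩
    · obtain ⟨n, rfl⟩ := Nat.exists_eq_add_of_le' hn
      refine ⟨φ (c • (T ^ (1 - 1)) s) * c', s', hs', ?_⟩
      have h : 1 + (n + 1) - 1 = n + 1 := by omega
      simp only [amul, h, hmulT, map_smul, Nat.add_sub_cancel, pow_succ', Module.End.mul_apply,
        smul_smul]
    · refine ⟨0, s, hs, ?_⟩
      have h : m + 2 - 1 = m + 1 := by omega
      simp [amul, h, hmulT, pow_succ', hφT]

/-- If moreover `T ^ d = 0`, every generating set has length at most `d`. -/
theorem Generates.Lset_eq_top {φ : B →ₗ[F] F} {T : End F B}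
    (hmulT : ∀ x y : B, x * y = φ x • T y) (hφT : ∀ y, φ (T y) = 0)
    {d : ℕ} (hT : T ^ d = 0) {S : Set B} (hS : Generates F (amul B) S) :
    Lset F (amul B) S d = ⊤ := by
  rw [eq_top_iff, ← show _ = _ from hS, Lset, Submodule.span_le]
  rintro w ⟨k, hw⟩
  by_cases hk : k ≤ d
  · exact Submodule.subset_span ⟨k, hk, hw⟩
  · obtain ⟨-, c, s, -, rfl⟩ := hw.exists_smul_pow hmulT hφT
    rw [pow_eq_zero_of_le (by omega : d ≤ k - 1) hT]
    simp

end RankOneMultiplication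

/-- for `d ≥ 3`, the `d`-dimensional algebra `C_d` with basis
`x_1, …, x_d` (here `b 0, …, b (d-1)`) and multiplication `x_1 x_i = x_{i+1}`
(`i = 1, …, d−1`), other products of basis vectors being zero, is a Novikov algebra
and `l(C_d) = d`. -/
theorem novikov_example_length_eq_dim
    {F B : Type*} [Field F] [NonUnitalNonAssocRing B] [Module F B]
    [SMulCommClass F B B] [IsScalarTower F B B]
    (d : ℕ) (hd : 3 ≤ d) (b : Basis (Fin d) F B)
    (hmul : ∀ i j : Fin d, b i * b j =
      if h : (i : ℕ) = 0 ∧ (j : ℕ) + 1 < d then b ⟨(j : ℕ) + 1, h.2⟩ else 0) :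
    (∀ x y z : B, x * (y * z) - (x * y) * z = y * (x * z) - (y * x) * z) ∧
    (∀ x y z : B, (x * y) * z = (x * z) * y) ∧
    (∀ S : Set B, S.Finite → Generates F (amul B) S → lenSet F (amul B) S ≤ d) ∧
    (∃ S : Set B, S.Finite ∧ Generates F (amul B) S ∧ lenSet F (amul B) S = d) := by
  let e : Fin d := ⟨0, by omega⟩
  let φ : B →ₗ[F] F := b.coord e
  let T : End F B := LinearMap.mulLeft F (b e)
  have hTb : ∀ j : Fin d, T (b j) = if h : (j : ℕ) + 1 < d then b ⟨(j : ℕ) + 1, h⟩ else 0 := by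
    intro j
    simp [T, hmul, e]
  have hmulT : ∀ x y : B, x * y = φ x • T y := by
    intro x y
    suffices h : LinearMap.mulRight F y = φ.smulRight (T y) from LinearMap.congr_fun h x
    refine b.ext fun i => ?_
    suffices h : LinearMap.mulLeft F (b i) = φ (b i) • T by simpa using LinearMap.congr_fun h y
    refine b.ext fun j => ?_
    by_cases hi : i = e
    · subst hi
      simp [φ, T]
    · have hi' : (i : ℕ) ≠ 0 := fun h => hi (Fin.ext h)
      simp [φ, hmul, hi', hi]
  have hφT : ∀ y, φ (T y) = 0 := by
    intro y
    suffices h : φ ∘ₗ T = 0 from LinearMap.congr_fun h y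
    refine b.ext fun j => ?_
    rw [LinearMap.comp_apply, hTb]
    split_ifs with h
    · simp [φ, e]
    · simp
  have hTpow : ∀ (k : ℕ) (j : Fin d),
      (T ^ k) (b j) = if h : (j : ℕ) + k < d then b ⟨(j : ℕ) + k, h⟩ else 0 := by
    intro k j
    induction k with
    | zero => simp
    | succ k ih =>
      rw [pow_succ', Module.End.mul_apply, ih]
      by_cases h : (j : ℕ) + k < d
      · simp only [h, dite_true, hTb, add_assoc]
      · have h' : ¬ (j : ℕ) + (k + 1) < d := by omega
        simp [h, h']
  have hTd : T ^ d = 0 := b.ext fun j => by simp [hTpow]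
  have hlen : ∀ S : Set B, Generates F (amul B) S → lenSet F (amul B) S ≤ d :=
    fun S hS => Nat.sInf_le (hS.Lset_eq_top hmulT hφT hTd)
  refine ⟨fun x y z => ?_, fun x y z => ?_, fun S _ => hlen S, {b e}, Set.finite_singleton _, ?_⟩
  · simp [hmulT, hφT, smul_smul, mul_comm]
  · simp [hmulT, hφT]
  have hword : ∀ k : ℕ, IsWord (amul B) {b e} (1 + k) ((T ^ k) (b e)) := by
    intro k
    induction k with
    | zero => exact .base rfl
    | succ k ih =>
      rw [pow_succ', Module.End.mul_apply, add_comm k 1]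
      exact .mul (.base rfl) ih
  have hgen : Generates F (amul B) {b e} := by
    rw [Generates, eq_top_iff, ← b.span_eq, Submodule.span_le]
    rintro _ ⟨j, rfl⟩
    refine Submodule.subset_span ⟨1 + j, ?_⟩
    simpa [hTpow, e] using hword j
  refine ⟨hgen, (hlen _ hgen).antisymm ?_⟩
  refine le_csInf ⟨d, hgen.Lset_eq_top hmulT hφT hTd⟩ fun k hk => ?_
  by_contra! hkd
  let l : Fin d := ⟨d - 1, by omega⟩
  have hle : Lset F (amul B) {b e} k ≤ LinearMap.ker (b.coord l) := by
    rw [Lset, Submodule.span_le]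
    rintro w ⟨m, hm, hw⟩
    obtain ⟨hm1, c, s, rfl, rfl⟩ := hw.exists_smul_pow hmulT hφT
    have h1 : m - 1 < d := by omega
    have h2 : m - 1 ≠ d - 1 := by omega
    simp [hTpow, e, l, h1, h2]
  have hl : b l ∈ LinearMap.ker (b.coord l) := hle (by rw [show _ = _ from hk]; trivial)
  simp at hl
end

section
/- For every integer d ≥ 3, the d-dimensional real algebra Z_d with basis x_1, …, x_d and multiplication determined by x_i x_j = (j/(i+j))·x_{i+j} whenever i + j ≤ d and x_i x_j = 0 whenever i + j > d, is a Zinbiel algebra and l(Z_d) = d. -/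
/-!
Framework: length of finite-dimensional not necessarily associative,
not necessarily unital algebras (non-unital convention: `L_0(S) = 0`).
The multiplication of the algebra is passed explicitly as a binary
operation `μ`, so that the same definitions apply to an algebra, to its
commutator algebra, to a Lie bracket, etc.
-/

open Submodule Module

/-- The basis `b` extended by zero to all natural indices. -/
noncomputable def Module.Basis.extendZero {B : Type*} [AddCommGroup B] [Module ℝ B] {d : ℕ}
    (b : Basis (Fin d) ℝ B) (n : ℕ) : B :=
  if h : n < d then b ⟨n, h⟩ else 0

section ExtendZero

variable {B : Type*} [AddCommGroup B] [Module ℝ B] {d : ℕ} (b : Basis (Fin d) ℝ B)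

lemma extendZero_of_lt {n : ℕ} (h : n < d) : b.extendZero n = b ⟨n, h⟩ := dif_pos h

lemma extendZero_of_le {n : ℕ} (h : d ≤ n) : b.extendZero n = 0 := dif_neg h.not_gt

lemma span_range_extendZero : span ℝ (Set.range b.extendZero) = ⊤ := by
  rw [eq_top_iff, ← b.span_eq]
  refine span_mono ?_
  rintro _ ⟨i, rfl⟩
  exact ⟨i, extendZero_of_lt b i.2⟩

end ExtendZero

section GradedMul

variable {B : Type*} [NonUnitalNonAssocRing B] [Module ℝ B] {X : ℕ → B}

/-- The Zinbiel identity holds once a spanning family multiplies by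
`x_i x_j = (j / (i + j)) x_{i+j}` (indices shifted by one). -/
lemma zinbiel_of_span_eq_top [SMulCommClass ℝ B B] [IsScalarTower ℝ B B]
    (hspan : span ℝ (Set.range X) = ⊤)
    (hX : ∀ i j : ℕ, X i * X j = (((j : ℝ) + 1) / (i + j + 2)) • X (i + j + 1)) (x y z : B) :
    x * (y * z) = (x * y + y * x) * z := by
  have mem (u : B) : u ∈ span ℝ (Set.range X) := hspan ▸ mem_top
  induction mem x using span_induction with
  | zero => simp
  | add u v _ _ hu hv => simp only [add_mul, mul_add] at *; rw [hu, hv]; abel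
  | smul c u _ hu => simp only [smul_mul_assoc, mul_smul_comm, ← smul_add, hu]
  | mem u hu =>
  obtain ⟨i, rfl⟩ := hu
  induction mem y using span_induction with
  | zero => simp
  | add u v _ _ hu hv => simp only [add_mul, mul_add] at *; rw [hu, hv]; abel
  | smul c u _ hu => simp only [smul_mul_assoc, mul_smul_comm, ← smul_add, hu]
  | mem u hu =>
  obtain ⟨j, rfl⟩ := hu
  induction mem z using span_induction with
  | zero => simp
  | add u v _ _ hu hv => simp only [mul_add, hu, hv]
  | smul c u _ hu => simp only [mul_smul_comm, hu]
  | mem u hu =>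
  obtain ⟨k, rfl⟩ := hu
  simp only [hX, mul_smul_comm, smul_mul_assoc, add_mul, smul_smul]
  rw [show j + i + 1 = i + j + 1 by ring, show i + (j + k + 1) + 1 = i + j + 1 + k + 1 by ring,
    ← add_smul]
  congr 1
  push_cast
  have h₁ : (j : ℝ) + k + 2 ≠ 0 := by positivity
  have h₂ : (i : ℝ) + j + 2 ≠ 0 := by positivity
  have h₃ : (j : ℝ) + i + 2 ≠ 0 := by positivity
  have h₄ : (i : ℝ) + (j + k + 1) + 2 ≠ 0 := by positivity
  have h₅ : (i : ℝ) + j + 1 + k + 2 ≠ 0 := by positivity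
  field_simp
  ring

/-- A word of length `k` lies in the span of the `x_n` with `n ≥ k` (indices shifted by one). -/
lemma IsWord.mem_span_image [SMulCommClass ℝ B B] [IsScalarTower ℝ B B]
    (hspan : span ℝ (Set.range X) = ⊤)
    (hX : ∀ i j : ℕ, X i * X j = (((j : ℝ) + 1) / (i + j + 2)) • X (i + j + 1))
    {S : Set B} {k : ℕ} {w : B} (hw : IsWord (amul B) S k w) :
    w ∈ span ℝ (Set.image X {n | k ≤ n + 1}) := by
  induction hw with
  | base ha => simp [hspan]
  | mul _ _ ihu ihv =>
    refine span_induction₂ (p := fun u v _ _ ↦ amul B u v ∈ _) ?_ ?_ ?_ ?_ ?_ ?_ ?_ ihu ihv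
    · rintro _ _ ⟨i, hi, rfl⟩ ⟨j, hj, rfl⟩
      rw [amul, hX]
      refine smul_mem _ _ (subset_span ⟨_, ?_, rfl⟩)
      simp only [Set.mem_ofPred_eq] at *
      omega
    · simp [amul]
    · simp [amul]
    · intro u v w _ _ _ hu hv
      simpa [amul, add_mul] using add_mem hu hv
    · intro u v w _ _ _ hu hv
      simpa [amul, mul_add] using add_mem hu hv
    · intro c u v _ _ hu
      simpa [amul, smul_mul_assoc] using smul_mem _ c hu
    · intro c u v _ _ hu
      simpa [amul, mul_smul_comm] using smul_mem _ c hu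

/-- Every word of length `k` in `x_1` is a multiple of `x_k` (indices shifted by one). -/
lemma IsWord.exists_eq_smul [SMulCommClass ℝ B B] [IsScalarTower ℝ B B]
    (hX : ∀ i j : ℕ, X i * X j = (((j : ℝ) + 1) / (i + j + 2)) • X (i + j + 1))
    {k : ℕ} {w : B} (hw : IsWord (amul B) {X 0} k w) :
    ∃ (n : ℕ) (c : ℝ), k = n + 1 ∧ w = c • X n := by
  induction hw with
  | base ha => exact ⟨0, 1, rfl, by simpa using ha⟩
  | mul _ _ ihu ihv =>
    obtain ⟨i, c, rfl, rfl⟩ := ihu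
    obtain ⟨j, e, rfl, rfl⟩ := ihv
    refine ⟨i + j + 1, c * e * ((j + 1) / (i + j + 2)), by ring, ?_⟩
    rw [amul, smul_mul_assoc, mul_smul_comm, hX, smul_smul, smul_smul]

/-- Some nonzero multiple of `x_{n+1}` is a word of length `n + 1` in `x_1`. -/
lemma exists_isWord_smul [SMulCommClass ℝ B B]
    (hX : ∀ i j : ℕ, X i * X j = (((j : ℝ) + 1) / (i + j + 2)) • X (i + j + 1)) (n : ℕ) :
    ∃ c : ℝ, c ≠ 0 ∧ IsWord (amul B) {X 0} (n + 1) (c • X n) := by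
  induction n with
  | zero => exact ⟨1, one_ne_zero, by simpa using IsWord.base (Set.mem_singleton (X 0))⟩
  | succ n ih =>
    obtain ⟨c, hc, hw⟩ := ih
    refine ⟨c * (((n : ℝ) + 1) / (n + 2)), mul_ne_zero hc (by positivity), ?_⟩
    have h := IsWord.mul (IsWord.base (μ := amul B) (Set.mem_singleton (X 0))) hw
    rw [amul, mul_smul_comm, hX, smul_smul, add_comm 1] at h
    simpa using h

lemma generates_singleton [SMulCommClass ℝ B B] (hspan : span ℝ (Set.range X) = ⊤)
    (hX : ∀ i j : ℕ, X i * X j = (((j : ℝ) + 1) / (i + j + 2)) • X (i + j + 1)) :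
    Generates ℝ (amul B) {X 0} := by
  rw [Generates, eq_top_iff, ← hspan, span_le]
  rintro _ ⟨n, rfl⟩
  obtain ⟨c, hc, hw⟩ := exists_isWord_smul hX n
  exact (smul_mem_iff _ hc).1 (subset_span ⟨_, hw⟩)

end GradedMul

/-- for `d ≥ 3`, the `d`-dimensional real algebra `Z_d` with basis
`x_1, …, x_d` (here `b 0, …, b (d-1)`, `b i` standing for `x_{i+1}`) and multiplication
`x_i x_j = (j/(i+j)) x_{i+j}` if `i + j ≤ d` and `x_i x_j = 0` otherwise, is a Zinbiel
algebra and `l(Z_d) = d`. -/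
theorem zinbiel_example_length_eq_dim
    {B : Type*} [NonUnitalNonAssocRing B] [Module ℝ B]
    [SMulCommClass ℝ B B] [IsScalarTower ℝ B B]
    (d : ℕ) (hd : 3 ≤ d) (b : Basis (Fin d) ℝ B)
    (hmul : ∀ i j : Fin d, b i * b j =
      if h : (i : ℕ) + (j : ℕ) + 2 ≤ d then
        ((((j : ℕ) : ℝ) + 1) / (((i : ℕ) : ℝ) + ((j : ℕ) : ℝ) + 2)) •
          b ⟨(i : ℕ) + (j : ℕ) + 1, by omega⟩
      else 0) :
    (∀ x y z : B, x * (y * z) = (x * y + y * x) * z) ∧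
    (∀ S : Set B, S.Finite → Generates ℝ (amul B) S → lenSet ℝ (amul B) S ≤ d) ∧
    (∃ S : Set B, S.Finite ∧ Generates ℝ (amul B) S ∧ lenSet ℝ (amul B) S = d) := by
  have hspan := span_range_extendZero b
  have hX : ∀ i j : ℕ, b.extendZero i * b.extendZero j =
      (((j : ℝ) + 1) / (i + j + 2)) • b.extendZero (i + j + 1) := by
    intro i j
    by_cases hi : i < d
    · by_cases hj : j < d
      · rw [extendZero_of_lt b hi, extendZero_of_lt b hj, hmul]
        split_ifs with h
        · rw [extendZero_of_lt b (n := i + j + 1) (by simp only at h; omega)]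
        · rw [extendZero_of_le b (n := i + j + 1) (by simp only at h; omega), smul_zero]
      · rw [extendZero_of_le b (n := j) (by omega),
          extendZero_of_le b (n := i + j + 1) (by omega), mul_zero, smul_zero]
    · rw [extendZero_of_le b (n := i) (by omega),
        extendZero_of_le b (n := i + j + 1) (by omega), zero_mul, smul_zero]
  have upper (S : Set B) (hS : Generates ℝ (amul B) S) : Lset ℝ (amul B) S d = ⊤ := by
    rw [Lset, eq_top_iff, ← hS, span_le]
    rintro w ⟨k, hw⟩
    rcases le_or_gt k d with hk | hk
    · exact subset_span ⟨k, hk, hw⟩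
    · suffices w = 0 from this ▸ zero_mem _
      rw [← mem_bot ℝ]
      refine span_le.2 ?_ (hw.mem_span_image hspan hX)
      rintro _ ⟨n, hn, rfl⟩
      exact extendZero_of_le b (by simp only [Set.mem_ofPred_eq] at hn; omega)
  have hgen := generates_singleton hspan hX
  refine ⟨zinbiel_of_span_eq_top hspan hX, fun S _ hS ↦ Nat.sInf_le (upper S hS),
    {b.extendZero 0}, Set.finite_singleton _, hgen, le_antisymm (Nat.sInf_le (upper _ hgen)) ?_⟩
  refine le_csInf ⟨d, upper _ hgen⟩ fun k (hk : Lset ℝ _ _ k = ⊤) ↦ ?_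
  by_contra! hkd
  let last : Fin d := ⟨d - 1, by omega⟩
  have hle : Lset ℝ (amul B) {b.extendZero 0} k ≤ LinearMap.ker (b.coord last) := by
    rw [Lset, span_le]
    rintro w ⟨m, hm, hw⟩
    obtain ⟨n, c, rfl, rfl⟩ := hw.exists_eq_smul hX
    have hne : (⟨n, by omega⟩ : Fin d) ≠ last := fun h ↦ by
      have : n = d - 1 := congrArg Fin.val h
      omega
    simp [extendZero_of_lt b (n := n) (by omega), Finsupp.single_eq_of_ne hne.symm]
  have hlast : b last ∈ LinearMap.ker (b.coord last) := hle (hk ▸ mem_top)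
  simp at hlast
end

section
/- For every field F, the 4-dimensional non-unital F-algebra R with basis e_1, e_2, e_3, e_4 and multiplication determined by e_1 e_1 = e_2, e_1 e_2 = e_3, e_3 e_2 = e_4, all other products of basis elements being zero, is a Vinberg (right-symmetric) algebra, i.e. it satisfies (xy)z − x(yz) = (xz)y − x(zy) for all x, y, z ∈ R; moreover {e_1} is a generating set of R with l({e_1}) = 5, so l(R) ≥ 5 > 4 = dim R. -/
/-!
Framework: length of finite-dimensional not necessarily associative,
not necessarily unital algebras (non-unital convention: `L_0(S) = 0`).
The multiplication of the algebra is passed explicitly as a binary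
operation `μ`, so that the same definitions apply to an algebra, to its
commutator algebra, to a Lie bracket, etc.
-/

open Submodule Module

section VinbergExample

variable {F B : Type*} [Field F] [NonUnitalNonAssocRing B] [Module F B]
  (e : Basis (Fin 4) F B)

/-- The multiplication table of the algebra, in coordinates. -/
lemma mul_eq_of_table [SMulCommClass F B B] [IsScalarTower F B B]
    (h11 : e 0 * e 0 = e 1) (h12 : e 0 * e 1 = e 2) (h32 : e 2 * e 1 = e 3)
    (hzero : ∀ i j : Fin 4,
      ¬((i, j) = ((0 : Fin 4), (0 : Fin 4)) ∨ (i, j) = ((0 : Fin 4), (1 : Fin 4)) ∨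
        (i, j) = ((2 : Fin 4), (1 : Fin 4))) → e i * e j = 0) (x y : B) :
    x * y = (e.repr x 0 * e.repr y 0) • e 1 + (e.repr x 0 * e.repr y 1) • e 2 +
      (e.repr x 2 * e.repr y 1) • e 3 := by
  conv_lhs => rw [← e.sum_repr x, ← e.sum_repr y]
  simp (discharger := decide) only [Fin.sum_univ_four, add_mul, mul_add, smul_mul_assoc,
    mul_smul_comm, h11, h12, h32, hzero, smul_zero, add_zero]
  module

/-- A nonzero word of length `k` in `e 0` is the basis vector of weight `k`,
where `e 0, e 1, e 2, e 3` have weights `1, 2, 3, 5`. -/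
lemma IsWord.eq_zero_or_eq_basis
    (h11 : e 0 * e 0 = e 1) (h12 : e 0 * e 1 = e 2) (h32 : e 2 * e 1 = e 3)
    (hzero : ∀ i j : Fin 4,
      ¬((i, j) = ((0 : Fin 4), (0 : Fin 4)) ∨ (i, j) = ((0 : Fin 4), (1 : Fin 4)) ∨
        (i, j) = ((2 : Fin 4), (1 : Fin 4))) → e i * e j = 0)
    {k : ℕ} {w : B} (hw : IsWord (amul B) {e 0} k w) :
    w = 0 ∨ ∃ i : Fin 4, w = e i ∧ k = ![1, 2, 3, 5] i := by
  induction hw with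
  | base ha => exact Or.inr ⟨0, ha, rfl⟩
  | mul _ _ iha ihb =>
    rcases iha with rfl | ⟨i, rfl, rfl⟩
    · simp [amul]
    rcases ihb with rfl | ⟨j, rfl, rfl⟩
    · simp [amul]
    by_cases h : (i, j) = ((0 : Fin 4), (0 : Fin 4)) ∨ (i, j) = ((0 : Fin 4), (1 : Fin 4)) ∨
        (i, j) = ((2 : Fin 4), (1 : Fin 4))
    · simp only [Prod.mk.injEq] at h
      rcases h with ⟨rfl, rfl⟩ | ⟨rfl, rfl⟩ | ⟨rfl, rfl⟩
      exacts [Or.inr ⟨1, h11, rfl⟩, Or.inr ⟨2, h12, rfl⟩, Or.inr ⟨3, h32, rfl⟩]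
    · exact Or.inl (hzero i j h)

/-- Every basis vector is a word in `e 0`, of length equal to its weight. -/
lemma isWord_basis
    (h11 : e 0 * e 0 = e 1) (h12 : e 0 * e 1 = e 2) (h32 : e 2 * e 1 = e 3) (i : Fin 4) :
    IsWord (amul B) {e 0} (![1, 2, 3, 5] i) (e i) := by
  have w0 : IsWord (amul B) {e 0} 1 (e 0) := .base rfl
  have w1 : IsWord (amul B) {e 0} 2 (e 1) := h11 ▸ w0.mul w0
  have w2 : IsWord (amul B) {e 0} 3 (e 2) := h12 ▸ w0.mul w1
  have w3 : IsWord (amul B) {e 0} 5 (e 3) := h32 ▸ w2.mul w1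
  fin_cases i
  exacts [w0, w1, w2, w3]

end VinbergExample

/-- the 4-dimensional algebra `R` with basis `e_1, e_2, e_3, e_4`
(here `e 0, …, e 3`) and multiplication `e_1e_1 = e_2`, `e_1e_2 = e_3`, `e_3e_2 = e_4`,
other products of basis vectors being zero, is a Vinberg (right-symmetric) algebra,
`{e_1}` generates it with `l({e_1}) = 5`, and `dim R = 4` (so `l(R) ≥ 5 > 4 = dim R`). -/
theorem vinberg_example_length_gt_dim
    {F B : Type*} [Field F] [NonUnitalNonAssocRing B] [Module F B]
    [SMulCommClass F B B] [IsScalarTower F B B]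
    (e : Basis (Fin 4) F B)
    (h11 : e 0 * e 0 = e 1) (h12 : e 0 * e 1 = e 2) (h32 : e 2 * e 1 = e 3)
    (hzero : ∀ i j : Fin 4,
      ¬((i, j) = ((0 : Fin 4), (0 : Fin 4)) ∨ (i, j) = ((0 : Fin 4), (1 : Fin 4)) ∨
        (i, j) = ((2 : Fin 4), (1 : Fin 4))) → e i * e j = 0) :
    (∀ x y z : B, (x * y) * z - x * (y * z) = (x * z) * y - x * (z * y)) ∧
    Generates F (amul B) {e 0} ∧
    lenSet F (amul B) {e 0} = 5 ∧
    finrank F B = 4 := by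
  refine ⟨fun x y z => ?_, ?_, ?_, by simp [finrank_eq_card_basis e]⟩
  · have hmul := mul_eq_of_table e h11 h12 h32 hzero
    have c0 (x y : B) : e.repr (x * y) 0 = 0 := by simp [hmul x y]
    have c1 (x y : B) : e.repr (x * y) 1 = e.repr x 0 * e.repr y 0 := by simp [hmul x y]
    have c2 (x y : B) : e.repr (x * y) 2 = e.repr x 0 * e.repr y 1 := by simp [hmul x y]
    rw [hmul (x * y) z, hmul x (y * z), hmul (x * z) y, hmul x (z * y)]
    simp only [c0, c1, c2]
    module
  · rw [Generates, eq_top_iff, ← e.span_eq]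
    refine span_mono ?_
    rintro _ ⟨i, rfl⟩
    exact ⟨_, isWord_basis e h11 h12 h32 i⟩
  · refine le_antisymm (Nat.sInf_le ?_) (le_csInf ⟨5, ?_⟩ fun k hk => ?_)
    iterate 2
      rw [Set.mem_ofPred_eq, Lset, eq_top_iff, ← e.span_eq]
      refine span_mono ?_
      rintro _ ⟨i, rfl⟩
      exact ⟨_, by fin_cases i <;> simp, isWord_basis e h11 h12 h32 i⟩
    by_contra! hlt
    have hle : Lset F (amul B) {e 0} k ≤ LinearMap.ker (e.coord 3) := by
      refine span_le.2 ?_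
      rintro w ⟨m, hm, hw⟩
      rcases hw.eq_zero_or_eq_basis e h11 h12 h32 hzero with rfl | ⟨i, rfl, rfl⟩
      · simp
      · fin_cases i <;> simp at hm ⊢
        omega
    have h3 : e 3 ∈ LinearMap.ker (e.coord 3) := hle (hk ▸ mem_top)
    simp at h3
end
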